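/- arXiv:0710.0106 — 7 statements merged into one kernel-verified Lean document; each statement's English description precedes it below -/
import Mathlib

section
/- Let q > 1/2 and let f be a fuzzy q-almost quadratic function from a fuzzy normed space (X, N) into a fuzzy Banach space (Y, N′). Then there exists a unique quadratic function Q : X → Y such that N′ (Q(x) − f(x)) t ≥ N x (((2^(2−p) − 1)/4)^q · t^q) for all x ∈ X and all t > 0, where p = 1/q. Moreover Q(x) is the fuzzy limit of the sequence f(2^n x)/4^n. -/
/-!
The proof is the direct method of Hyers, with `a n x = 4⁻ⁿ f(2ⁿ x)`. Taking `y = x` in the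
almost-quadratic inequality (and `f 0 = 0`, from `x = y = 0`) bounds `a (n+1) x - a n x`: its fuzzy
norm at `rⁿ τ / 2`, with `r = 2^(p-2) < 1`, is at least `N x (τ^q)`. Summing the geometric series
(`telescoped_bound`) gives at once that `a · x` is Cauchy and that its limit `Q x` satisfies the
stated estimate; the constant `(2^(2-p) - 1)/4` is not optimal, which leaves room to pass from
`a n x` to `Q x`.

Both remaining claims use that `(4ⁿ t)^q / 2ⁿ → ∞` for `q > 1/2` (`tendsto_scaled`). It shows that
the quadratic defect of `a n` tends to `0`, so `Q` is quadratic, and that `a n x → Q' x` for every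
quadratic `Q'` satisfying the estimate, so `Q' = Q` by uniqueness of fuzzy limits.
-/

open Filter Finset

/-- A fuzzy norm on a real vector space, following Bag–Samanta. -/
structure IsFuzzyNorm {X : Type*} [AddCommGroup X] [Module ℝ X] (N : X → ℝ → ℝ) : Prop where
  nonneg : ∀ (x : X) (t : ℝ), 0 ≤ N x t
  le_one : ∀ (x : X) (t : ℝ), N x t ≤ 1
  eq_zero_of_nonpos : ∀ (x : X) (c : ℝ), c ≤ 0 → N x c = 0
  eq_zero_iff : ∀ x : X, x = 0 ↔ ∀ c : ℝ, 0 < c → N x c = 1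
  smul_eq : ∀ (c : ℝ) (x : X) (t : ℝ), c ≠ 0 → N (c • x) t = N x (t / |c|)
  min_le_add : ∀ (x y : X) (s t : ℝ), min (N x s) (N y t) ≤ N (x + y) (s + t)
  mono : ∀ x : X, Monotone (N x)
  tendsto_one : ∀ x : X, Tendsto (N x) atTop (nhds 1)

/-- Convergence of a sequence to a fuzzy limit in a fuzzy normed space. -/
def FuzzyTendsto {X : Type*} [AddCommGroup X] [Module ℝ X] (N : X → ℝ → ℝ)
    (xs : ℕ → X) (x : X) : Prop :=
  ∀ t : ℝ, 0 < t → Tendsto (fun n => N (xs n - x) t) atTop (nhds 1)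

/-- Cauchy sequences in a fuzzy normed space. -/
def FuzzyCauchy {X : Type*} [AddCommGroup X] [Module ℝ X] (N : X → ℝ → ℝ)
    (xs : ℕ → X) : Prop :=
  ∀ ε : ℝ, 0 < ε → ∀ t : ℝ, 0 < t → ∃ n₀ : ℕ, ∀ n ≥ n₀, ∀ p : ℕ, 0 < p →
    1 - ε < N (xs (n + p) - xs n) t

/-- A fuzzy normed space is complete (a fuzzy Banach space) if every Cauchy
sequence converges. -/
def IsFuzzyComplete {X : Type*} [AddCommGroup X] [Module ℝ X] (N : X → ℝ → ℝ) : Prop :=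
  ∀ xs : ℕ → X, FuzzyCauchy N xs → ∃ x : X, FuzzyTendsto N xs x

/-- Quadratic functional equation. -/
def IsQuadratic {X Y : Type*} [AddCommGroup X] [AddCommGroup Y] (Q : X → Y) : Prop :=
  ∀ x y : X, Q (x + y) + Q (x - y) = 2 • Q x + 2 • Q y

/-- Additive functional equation. -/
def IsAdditive {X Y : Type*} [AddCommGroup X] [AddCommGroup Y] (T : X → Y) : Prop :=
  ∀ x y : X, T (x + y) = T x + T y

section FuzzyNorm

variable {X : Type*} [AddCommGroup X] [Module ℝ X] {N : X → ℝ → ℝ}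

lemma IsFuzzyNorm.neg_eq (hN : IsFuzzyNorm N) (x : X) (t : ℝ) : N (-x) t = N x t := by
  have h := hN.smul_eq (-1) x t (by norm_num)
  simpa using h

lemma IsFuzzyNorm.sub_comm (hN : IsFuzzyNorm N) (x y : X) (t : ℝ) :
    N (x - y) t = N (y - x) t := by
  rw [← hN.neg_eq (x - y), neg_sub]

lemma IsFuzzyNorm.zero_eq (hN : IsFuzzyNorm N) {t : ℝ} (ht : 0 < t) : N 0 t = 1 :=
  (hN.eq_zero_iff 0).1 rfl t ht

lemma FuzzyTendsto.add (hN : IsFuzzyNorm N) {u v : ℕ → X} {x y : X}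
    (hu : FuzzyTendsto N u x) (hv : FuzzyTendsto N v y) :
    FuzzyTendsto N (fun n => u n + v n) (x + y) := by
  intro t ht
  have h := (hu (t / 2) (by linarith)).min (hv (t / 2) (by linarith))
  rw [min_self] at h
  refine tendsto_of_tendsto_of_tendsto_of_le_of_le h tendsto_const_nhds ?_
    (fun n => hN.le_one _ _)
  intro n
  have h2 := hN.min_le_add (u n - x) (v n - y) (t / 2) (t / 2)
  rwa [add_halves, sub_add_sub_comm] at h2

lemma FuzzyTendsto.smul (hN : IsFuzzyNorm N) {u : ℕ → X} {x : X} {c : ℝ} (hc : c ≠ 0)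
    (hu : FuzzyTendsto N u x) : FuzzyTendsto N (fun n => c • u n) (c • x) := by
  intro t ht
  have h := hu (t / |c|) (div_pos ht (abs_pos.2 hc))
  simpa only [← smul_sub, hN.smul_eq c _ _ hc] using h

lemma FuzzyTendsto.unique (hN : IsFuzzyNorm N) {u : ℕ → X} {x y : X}
    (hx : FuzzyTendsto N u x) (hy : FuzzyTendsto N u y) : x = y := by
  rw [← sub_eq_zero, hN.eq_zero_iff]
  intro t ht
  have h := (hx (t / 2) (by linarith)).min (hy (t / 2) (by linarith))
  rw [min_self] at h
  refine le_antisymm (hN.le_one _ _) (le_of_tendsto h (Eventually.of_forall fun n => ?_))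
  have h2 := hN.min_le_add (x - u n) (u n - y) (t / 2) (t / 2)
  rwa [add_halves, sub_add_sub_cancel, hN.sub_comm x] at h2

/-- The growth condition `q > 1/2` enters here: `4^(n q)` beats the factor `2ⁿ` coming from the
dilation of `x`. -/
lemma IsFuzzyNorm.tendsto_scaled (hN : IsFuzzyNorm N) {q : ℝ} (hq : 1 / 2 < q) (x : X)
    {K t : ℝ} (hK : 0 < K) (ht : 0 < t) :
    Tendsto (fun n : ℕ => N ((2 : ℝ) ^ n • x) (K * ((4 : ℝ) ^ n * t) ^ q)) atTop (nhds 1) := by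
  have h4 : 1 < (4 : ℝ) ^ q / 2 := by
    have h : (4 : ℝ) ^ (1 / 2 : ℝ) < 4 ^ q := Real.rpow_lt_rpow_of_exponent_lt (by norm_num) hq
    have h' : (4 : ℝ) ^ (1 / 2 : ℝ) = 2 := by
      rw [show (4 : ℝ) = 2 ^ (2 : ℝ) by norm_num, ← Real.rpow_mul (by norm_num)]; norm_num
    rw [lt_div_iff₀ (by norm_num)]; linarith
  have hlim : Tendsto (fun n : ℕ => K * t ^ q * ((4 : ℝ) ^ q / 2) ^ n) atTop atTop :=
    (tendsto_pow_atTop_atTop_of_one_lt h4).const_mul_atTop (by positivity)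
  refine ((hN.tendsto_one x).comp hlim).congr fun n => ?_
  have h2 : (2 : ℝ) ^ n ≠ 0 := by positivity
  rw [hN.smul_eq _ _ _ h2, abs_of_pos (by positivity), Real.mul_rpow (by positivity) ht.le,
    ← Real.rpow_natCast_mul (by norm_num), mul_comm (n : ℝ) q,
    Real.rpow_mul_natCast (by norm_num), Function.comp_apply, div_pow]
  congr 1
  field_simp

end FuzzyNorm

lemma IsQuadratic.map_two_pow {X Y : Type*} [AddCommGroup X] [Module ℝ X] [AddCommGroup Y]
    [Module ℝ Y] {Q : X → Y} (hQ : IsQuadratic Q) (n : ℕ) (x : X) :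
    Q ((2 : ℝ) ^ n • x) = (4 : ℝ) ^ n • Q x := by
  have h0 : Q 0 = 0 := by
    have h := hQ 0 0
    simp only [add_zero, sub_zero] at h
    have h' : (2 : ℝ) • Q 0 = 0 := by linear_combination (norm := module) (-1 : ℝ) • h
    simpa using h'
  have h2 : ∀ z : X, Q ((2 : ℝ) • z) = (4 : ℝ) • Q z := by
    intro z
    have h := hQ z z
    rw [sub_self, h0, ← two_smul ℝ z] at h
    linear_combination (norm := module) h
  induction n with
  | zero => simp
  | succ n ih => rw [pow_succ', mul_smul, h2, ih, smul_smul, pow_succ']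

/-- Partial sums of the geometric estimate. The sum of `k` steps is
`τ / (2 (1 - r)) * (rⁿ - rⁿ⁺ᵏ)`; the induction runs with `2 rⁿ` in place of `rⁿ`, which keeps the
bound positive at `k = 0`, where `N' 0 0 = 0` would make it fail. -/
lemma telescoped_bound {Y : Type*} [AddCommGroup Y] [Module ℝ Y] {N' : Y → ℝ → ℝ}
    (hN' : IsFuzzyNorm N') {a : ℕ → Y} {r τ b : ℝ} (hr0 : 0 < r) (hr1 : r < 1) (hτ : 0 < τ)
    (hb : b ≤ 1) (hstep : ∀ n, b ≤ N' (a (n + 1) - a n) (r ^ n * τ / 2)) (n k : ℕ) :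
    b ≤ N' (a (n + k) - a n) (r ^ n * τ / (1 - r)) := by
  have h1 : 0 < 1 - r := by linarith
  have key : b ≤ N' (a (n + k) - a n) (τ / (2 * (1 - r)) * (2 * r ^ n - r ^ (n + k))) := by
    induction k with
    | zero =>
      rw [add_zero, sub_self, hN'.zero_eq]
      · exact hb
      · have : 2 * r ^ n - r ^ n = r ^ n := by ring
        rw [this]; positivity
    | succ k ih =>
      have h := (le_min (hstep (n + k)) ih).trans (hN'.min_le_add _ _ _ _)
      rw [sub_add_sub_cancel] at h
      refine h.trans_eq ?_
      rw [← add_assoc, pow_succ]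
      congr 1
      field_simp
      ring
  refine key.trans (hN'.mono _ ?_)
  have : r ^ n * τ / (1 - r) = τ / (2 * (1 - r)) * (2 * r ^ n) := by field_simp
  rw [this]
  have : 0 < r ^ (n + k) := by positivity
  gcongr
  linarith

/-- Fuzzy Hyers–Ulam–Rassias stability of the quadratic functional equation
(Theorem 2.1): a fuzzy `q`-almost quadratic function (`q > 1/2`) from a fuzzy
normed space into a fuzzy Banach space can be approximated by a unique
quadratic function `Q`, obtained as the fuzzy limit of `f(2^n x)/4^n`. -/
theorem fuzzy_stability_quadratic
    {X Y : Type*} [AddCommGroup X] [Module ℝ X] [AddCommGroup Y] [Module ℝ Y]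
    (N : X → ℝ → ℝ) (N' : Y → ℝ → ℝ)
    (hN : IsFuzzyNorm N) (hN' : IsFuzzyNorm N') (hYcomplete : IsFuzzyComplete N')
    (q p : ℝ) (hq : 1 / 2 < q) (hp : p = 1 / q)
    (f : X → Y)
    (hf : ∀ x y : X, ∀ s t : ℝ, 0 ≤ s → 0 ≤ t →
      min (N x (t ^ q)) (N y (s ^ q)) ≤
        N' (f (x + y) + f (x - y) - 2 • f x - 2 • f y) (t + s)) :
    ∃ Q : X → Y,
      (IsQuadratic Q ∧
        (∀ x : X, ∀ t : ℝ, 0 < t →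
          N x ((((2 : ℝ) ^ ((2 : ℝ) - p) - 1) / 4) ^ q * t ^ q) ≤ N' (Q x - f x) t) ∧
        (∀ x : X, FuzzyTendsto N' (fun n : ℕ => ((4 : ℝ) ^ n)⁻¹ • f (((2 : ℝ) ^ n) • x)) (Q x))) ∧
      ∀ Q' : X → Y, IsQuadratic Q' →
        (∀ x : X, ∀ t : ℝ, 0 < t →
          N x ((((2 : ℝ) ^ ((2 : ℝ) - p) - 1) / 4) ^ q * t ^ q) ≤ N' (Q' x - f x) t) →
        Q' = Q := by
  have hq0 : 0 < q := by linarith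
  have hp0 : 0 < p := by rw [hp]; positivity
  have hp2 : p < 2 := by rw [hp, div_lt_iff₀ hq0]; linarith
  have hpq : p * q = 1 := by rw [hp]; field_simp
  -- `u = 2^(-p)` makes all constants rational: `2^(2-p) = 4u` and `r = 1/(4u)`.
  obtain ⟨u, hu⟩ : ∃ u : ℝ, u = 2 ^ (-p) := ⟨_, rfl⟩
  have hu0 : 0 < u := by rw [hu]; positivity
  have hu1 : u < 1 := by
    rw [hu]; exact Real.rpow_lt_one_of_one_lt_of_neg (by norm_num) (by linarith)
  have hu4 : 1 < 4 * u := by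
    have h : (2 : ℝ) ^ (-2 : ℝ) < 2 ^ (-p) :=
      Real.rpow_lt_rpow_of_exponent_lt (by norm_num) (by linarith)
    rw [← hu] at h
    norm_num at h
    linarith
  have huq : u ^ q = 1 / 2 := by
    rw [hu, ← Real.rpow_mul (by norm_num), neg_mul, hpq, Real.rpow_neg_one]; norm_num
  have hC : (2 : ℝ) ^ ((2 : ℝ) - p) = 4 * u := by
    rw [sub_eq_add_neg, Real.rpow_add (by norm_num), ← hu]; norm_num
  rw [hC]
  obtain ⟨r, hr⟩ : ∃ r : ℝ, r = 1 / (4 * u) := ⟨_, rfl⟩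
  have hr0 : 0 < r := by rw [hr]; positivity
  have hr1 : r < 1 := by rw [hr, div_lt_one (by positivity)]; exact hu4
  have hf0 : f 0 = 0 := by
    have h : (-2 : ℝ) • f 0 = 0 := by
      rw [hN'.eq_zero_iff]
      intro c hc
      refine le_antisymm (hN'.le_one _ _) ?_
      have h := hf 0 0 (c / 2) (c / 2) (by positivity) (by positivity)
      rw [hN.zero_eq (by positivity), min_self, add_halves] at h
      refine h.trans_eq ?_
      congr 1
      rw [add_zero, sub_zero]
      module
    simpa using h
  set a : X → ℕ → Y := fun x n => ((4 : ℝ) ^ n)⁻¹ • f (((2 : ℝ) ^ n) • x) with ha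
  have hstep : ∀ x : X, ∀ τ : ℝ, 0 < τ → ∀ n : ℕ,
      N x (τ ^ q) ≤ N' (a x (n + 1) - a x n) (r ^ n * τ / 2) := by
    intro x τ hτ n
    have hs0 : 0 ≤ u⁻¹ ^ n * τ := by positivity
    have h := hf ((2 : ℝ) ^ n • x) ((2 : ℝ) ^ n • x) _ _ hs0 hs0
    have e1 : (u⁻¹ ^ n * τ) ^ q = 2 ^ n * τ ^ q := by
      rw [Real.mul_rpow (by positivity) hτ.le, ← Real.rpow_natCast_mul (by positivity),
        mul_comm (n : ℝ) q, Real.rpow_mul_natCast (by positivity), Real.inv_rpow hu0.le, huq]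
      norm_num
    have e2 : a x (n + 1) - a x n = ((4 : ℝ) ^ (n + 1))⁻¹ •
        (f ((2 : ℝ) ^ n • x + (2 : ℝ) ^ n • x) + f ((2 : ℝ) ^ n • x - (2 : ℝ) ^ n • x)
          - 2 • f ((2 : ℝ) ^ n • x) - 2 • f ((2 : ℝ) ^ n • x)) := by
      have e3 : ((4 : ℝ) ^ n)⁻¹ = ((4 : ℝ) ^ (n + 1))⁻¹ * 4 := by
        rw [pow_succ]; field_simp
      simp only [ha]
      rw [sub_self, hf0, ← two_smul ℝ ((2 : ℝ) ^ n • x), smul_smul, ← pow_succ', e3]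
      module
    rw [min_self, e1, hN.smul_eq _ _ _ (by positivity), abs_of_pos (by positivity),
      mul_div_cancel_left₀ _ (by positivity)] at h
    rw [e2, hN'.smul_eq _ _ _ (by positivity), abs_of_pos (by positivity)]
    refine h.trans_eq ?_
    congr 1
    rw [hr, one_div, mul_inv, mul_pow, pow_succ, inv_pow, inv_pow]
    field_simp
    norm_num
  have htel : ∀ x : X, ∀ τ : ℝ, 0 < τ → ∀ n k : ℕ,
      N x (τ ^ q) ≤ N' (a x (n + k) - a x n) (r ^ n * τ / (1 - r)) := fun x τ hτ n k =>
    telescoped_bound hN' hr0 hr1 hτ (hN.le_one _ _) (hstep x τ hτ) n k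
  have hcauchy : ∀ x, FuzzyCauchy N' (a x) := by
    intro x ε hε t ht
    have h1 : Tendsto (fun τ : ℝ => N x (τ ^ q)) atTop (nhds 1) :=
      (hN.tendsto_one x).comp (tendsto_rpow_atTop hq0)
    obtain ⟨τ, hτε, hτ⟩ :=
      ((h1.eventually (lt_mem_nhds (show 1 - ε < 1 by linarith))).and
        (eventually_gt_atTop 0)).exists
    have h2 : Tendsto (fun n : ℕ => r ^ n * τ / (1 - r)) atTop (nhds 0) := by
      have := ((tendsto_pow_atTop_nhds_zero_of_lt_one hr0.le hr1).mul_const τ).div_const (1 - r)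
      simpa using this
    obtain ⟨n₀, hn₀⟩ := eventually_atTop.1 (h2.eventually (gt_mem_nhds ht))
    exact ⟨n₀, fun n hn k _ =>
      hτε.trans_le ((htel x τ hτ n k).trans (hN'.mono _ (hn₀ n hn).le))⟩
  choose Q hQ using fun x => hYcomplete (a x) (hcauchy x)
  refine ⟨Q, ⟨?_, ?_, hQ⟩, ?_⟩
  · intro x y
    have hlim : FuzzyTendsto N'
        (fun n => (a (x + y) n + a (x - y) n) + ((-2 : ℝ) • a x n + (-2 : ℝ) • a y n))
        ((Q (x + y) + Q (x - y)) + ((-2 : ℝ) • Q x + (-2 : ℝ) • Q y)) :=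
      FuzzyTendsto.add hN' (FuzzyTendsto.add hN' (hQ _) (hQ _))
        (FuzzyTendsto.add hN' (FuzzyTendsto.smul hN' (by norm_num) (hQ _))
          (FuzzyTendsto.smul hN' (by norm_num) (hQ _)))
    have hzero : FuzzyTendsto N'
        (fun n => (a (x + y) n + a (x - y) n) + ((-2 : ℝ) • a x n + (-2 : ℝ) • a y n)) 0 := by
      intro t ht
      have h := (hN.tendsto_scaled hq x one_pos (half_pos ht)).min
        (hN.tendsto_scaled hq y one_pos (half_pos ht))
      rw [min_self] at h
      refine tendsto_of_tendsto_of_tendsto_of_le_of_le h tendsto_const_nhds ?_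
        (fun n => hN'.le_one _ _)
      intro n
      have hn : 0 ≤ (4 : ℝ) ^ n * (t / 2) := by positivity
      have h2 := hf ((2 : ℝ) ^ n • x) ((2 : ℝ) ^ n • y) _ _ hn hn
      have e : (a (x + y) n + a (x - y) n) + ((-2 : ℝ) • a x n + (-2 : ℝ) • a y n) - 0
          = ((4 : ℝ) ^ n)⁻¹ • (f ((2 : ℝ) ^ n • x + (2 : ℝ) ^ n • y)
            + f ((2 : ℝ) ^ n • x - (2 : ℝ) ^ n • y)
            - 2 • f ((2 : ℝ) ^ n • x) - 2 • f ((2 : ℝ) ^ n • y)) := by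
        simp only [ha, smul_add ((2 : ℝ) ^ n) x y, smul_sub ((2 : ℝ) ^ n) x y]
        module
      simp only [one_mul]
      rw [e, hN'.smul_eq _ _ _ (by positivity), abs_of_pos (by positivity)]
      refine h2.trans_eq ?_
      congr 1
      field_simp
      norm_num
    have h := FuzzyTendsto.unique hN' hlim hzero
    linear_combination (norm := module) h
  · intro x t ht
    have hτ : 0 < (4 * u - 1) / 4 * t := mul_pos (by linarith) ht
    rw [← Real.mul_rpow (by linarith) ht.le]
    -- The partial sums are controlled at `u * t < t`; the rest absorbs the passage to the limit.
    have e : r ^ 0 * ((4 * u - 1) / 4 * t) / (1 - r) = u * t := by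
      have : 4 * u - 1 ≠ 0 := by linarith
      have : 1 - r ≠ 0 := by linarith
      rw [div_eq_iff this, hr]
      field_simp
    have h1 := htel x _ hτ 0
    rw [e] at h1
    have hlim := (tendsto_const_nhds (x := N x (((4 * u - 1) / 4 * t) ^ q))).min
      (hQ x ((1 - u) * t) (mul_pos (by linarith) ht))
    rw [min_eq_left (hN.le_one _ _)] at hlim
    refine le_of_tendsto hlim (Eventually.of_forall fun n => ?_)
    have h2 := h1 n
    have h3 := hN'.min_le_add (a x (0 + n) - a x 0) (Q x - a x n) (u * t) ((1 - u) * t)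
    have e2 : a x (0 + n) - a x 0 + (Q x - a x n) = Q x - f x := by
      simp [ha]
    have e3 : u * t + (1 - u) * t = t := by ring
    rw [e2, e3, hN'.sub_comm (Q x)] at h3
    exact (min_le_min_right _ h2).trans h3
  · intro Q' hQ' hb
    funext x
    refine FuzzyTendsto.unique hN' (u := a x) ?_ (hQ x)
    intro t ht
    refine tendsto_of_tendsto_of_tendsto_of_le_of_le
      (hN.tendsto_scaled hq x (K := ((4 * u - 1) / 4) ^ q)
        (Real.rpow_pos_of_pos (by linarith) _) ht) tendsto_const_nhds ?_
      (fun n => hN'.le_one _ _)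
    intro n
    have h := hb ((2 : ℝ) ^ n • x) ((4 : ℝ) ^ n * t) (by positivity)
    have e : Q' x - a x n
        = ((4 : ℝ) ^ n)⁻¹ • (Q' ((2 : ℝ) ^ n • x) - f ((2 : ℝ) ^ n • x)) := by
      rw [hQ'.map_two_pow, smul_sub, inv_smul_smul₀ (by positivity)]
    have e2 : N' (a x n - Q' x) t
        = N' (Q' ((2 : ℝ) ^ n • x) - f ((2 : ℝ) ^ n • x)) ((4 : ℝ) ^ n * t) := by
      rw [hN'.sub_comm, e, hN'.smul_eq _ _ _ (by positivity), abs_of_pos (by positivity)]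
      congr 1
      field_simp
    exact h.trans_eq e2.symm
end

section
/- Let q > 1/2, p = 1/q, let (X, N) be a fuzzy normed space and (Y, N′) a fuzzy normed space, and let f : X → Y be any function. If Q and Q′ are two quadratic functions from X to Y such that N′ (Q(x) − f(x)) t ≥ N x (((2^(2−p) − 1)/4)^q · t^q) and N′ (Q′(x) − f(x)) t ≥ N x (((2^(2−p) − 1)/4)^q · t^q) for all x ∈ X and all t > 0, then Q = Q′. -/
/-!
A quadratic function satisfies `Q (2 ^ n • x) = 4 ^ n • Q x`. Hence, by homogeneity of `N'`, the
value `N' (Q x - Q' x) t` equals `N' (Q (2 ^ n • x) - Q' (2 ^ n • x)) (4 ^ n * t)`, and comparing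
both functions with `f` at `2 ^ n • x` bounds it below by `N x (K * (4 ^ q / 2) ^ n)` for a
constant `K > 0` depending on `t`. Since `q > 1 / 2` gives `4 ^ q / 2 > 1`, this bound tends to `1`
as `n → ∞`, so `N' (Q x - Q' x) t = 1` for all `t > 0`, that is, `Q x = Q' x`.
-/

open Filter Finset

theorem IsQuadratic.map_two_pow_smul {X Y : Type*} [AddCommGroup X] [Module ℝ X]
    [AddCommGroup Y] [Module ℝ Y] {Q : X → Y} (hQ : IsQuadratic Q) (x : X) (n : ℕ) :
    Q ((2 : ℝ) ^ n • x) = (4 : ℝ) ^ n • Q x := by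
  have h0 : Q 0 = 0 := by
    have h := hQ 0 0
    simp only [add_zero, sub_zero] at h
    rw [← two_nsmul] at h
    have h2 : (2 : ℝ) • Q 0 = 0 := by
      rw [ofNat_smul_eq_nsmul ℝ 2]
      exact left_eq_add.mp h
    exact (smul_eq_zero.mp h2).resolve_left two_ne_zero
  have hdouble : ∀ y : X, Q ((2 : ℝ) • y) = (4 : ℝ) • Q y := by
    intro y
    have h := hQ y y
    rw [sub_self, h0, add_zero, ← two_smul ℝ y] at h
    rw [h]
    module
  induction n with
  | zero => simp
  | succ k ih => rw [pow_succ', mul_smul, hdouble, ih, smul_smul, ← pow_succ']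

theorem IsFuzzyNorm.map_neg {Y : Type*} [AddCommGroup Y] [Module ℝ Y] {N : Y → ℝ → ℝ}
    (hN : IsFuzzyNorm N) (y : Y) (t : ℝ) : N (-y) t = N y t := by
  have h := hN.smul_eq (-1) y t (by norm_num)
  simpa using h

/-- The triangle inequality through a common approximation `c`, with `t` split into halves. -/
theorem IsFuzzyNorm.min_le_sub {Y : Type*} [AddCommGroup Y] [Module ℝ Y] {N : Y → ℝ → ℝ}
    (hN : IsFuzzyNorm N) (a b c : Y) (t : ℝ) :
    min (N (a - c) (t / 2)) (N (b - c) (t / 2)) ≤ N (a - b) t := by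
  have h := hN.min_le_add (a - c) (-(b - c)) (t / 2) (t / 2)
  rw [hN.map_neg, add_halves] at h
  convert h using 2
  abel

/-- Uniqueness part of the fuzzy stability theorem: two quadratic functions
satisfying the same fuzzy approximation estimate coincide. -/
theorem fuzzy_stability_quadratic_unique
    {X Y : Type*} [AddCommGroup X] [Module ℝ X] [AddCommGroup Y] [Module ℝ Y]
    (N : X → ℝ → ℝ) (N' : Y → ℝ → ℝ)
    (hN : IsFuzzyNorm N) (hN' : IsFuzzyNorm N')
    (q p : ℝ) (hq : 1 / 2 < q) (hp : p = 1 / q)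
    (f Q Q' : X → Y)
    (hQ : IsQuadratic Q) (hQ' : IsQuadratic Q')
    (hQf : ∀ x : X, ∀ t : ℝ, 0 < t →
      N x ((((2 : ℝ) ^ ((2 : ℝ) - p) - 1) / 4) ^ q * t ^ q) ≤ N' (Q x - f x) t)
    (hQ'f : ∀ x : X, ∀ t : ℝ, 0 < t →
      N x ((((2 : ℝ) ^ ((2 : ℝ) - p) - 1) / 4) ^ q * t ^ q) ≤ N' (Q' x - f x) t) :
    Q = Q' := by
  have hq0 : 0 < q := by linarith
  -- `p < 2` makes the constant in the estimate positive.
  have hp2 : p < 2 := by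
    rw [hp, div_lt_iff₀ hq0]
    linarith
  have hc : 0 < ((2 : ℝ) ^ ((2 : ℝ) - p) - 1) / 4 := by
    have := Real.one_lt_rpow (x := 2) (by norm_num) (sub_pos.mpr hp2)
    linarith
  set c := ((2 : ℝ) ^ ((2 : ℝ) - p) - 1) / 4
  have hr : 1 < (4 : ℝ) ^ q / 2 := by
    have h1 : (4 : ℝ) ^ (1 / 2 : ℝ) = 2 := by
      rw [← Real.sqrt_eq_rpow, show (4 : ℝ) = 2 ^ 2 by norm_num]
      exact Real.sqrt_sq (by norm_num)
    have h2 := Real.rpow_lt_rpow_of_exponent_lt (x := 4) (by norm_num) hq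
    rw [h1] at h2
    linarith
  funext x
  rw [← sub_eq_zero, hN'.eq_zero_iff]
  intro t ht
  refine le_antisymm (hN'.le_one _ _) ?_
  have hK : 0 < c ^ q * (t / 2) ^ q := by positivity
  have hlim : Tendsto (fun n : ℕ => N x (c ^ q * (t / 2) ^ q * ((4 : ℝ) ^ q / 2) ^ n))
      atTop (nhds 1) :=
    (hN.tendsto_one x).comp ((tendsto_pow_atTop_atTop_of_one_lt hr).const_mul_atTop hK)
  refine le_of_tendsto' hlim fun n => ?_
  have h4 : (0 : ℝ) < 4 ^ n := by positivity
  have hpow : ((4 : ℝ) ^ n * t / 2) ^ q = ((4 : ℝ) ^ q) ^ n * (t / 2) ^ q := by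
    rw [mul_div_assoc, Real.mul_rpow h4.le (by positivity), ← Real.rpow_natCast_mul (by norm_num),
      mul_comm (n : ℝ) q, Real.rpow_mul_natCast (by norm_num)]
  have hscale : N ((2 : ℝ) ^ n • x) (c ^ q * ((4 : ℝ) ^ n * t / 2) ^ q)
      = N x (c ^ q * (t / 2) ^ q * ((4 : ℝ) ^ q / 2) ^ n) := by
    rw [hN.smul_eq _ _ _ (by positivity), abs_of_pos (by positivity), hpow, div_pow]
    congr 1
    ring
  have hhom : N' (Q ((2 : ℝ) ^ n • x) - Q' ((2 : ℝ) ^ n • x)) ((4 : ℝ) ^ n * t)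
      = N' (Q x - Q' x) t := by
    rw [hQ.map_two_pow_smul, hQ'.map_two_pow_smul, ← smul_sub, hN'.smul_eq _ _ _ h4.ne',
      abs_of_pos h4, mul_div_cancel_left₀ _ h4.ne']
  rw [← hscale, ← hhom]
  exact (le_min (hQf _ _ (by positivity)) (hQ'f _ _ (by positivity))).trans
    (hN'.min_le_sub _ _ (f ((2 : ℝ) ^ n • x)) _)
end

section
/- Let q > 1/2, p = 1/q, and let f be a fuzzy q-almost quadratic function from a fuzzy normed space (X, N) into a fuzzy Banach space (Y, N′), and let Q : X → Y be the quadratic function given by the fuzzy limit Q(x) = lim f(2^n x)/4^n. If for each x ∈ X the map t ↦ N′ (Q(x) − f(x)) t is right continuous at each point of (0, ∞), then N′ (Q(x) − f(x)) t ≥ N x (((2^(2−p) − 1)/2)^q · t^q) for all x ∈ X and all t > 0. -/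
/-!
Write `b = 2 ^ p`, so `b ^ q = 2` and `1 < b < 4`, and `fₙ(x) = f(2ⁿ x) / 4ⁿ`. Taking both arguments
equal to `0` in the almost-quadratic inequality gives `f 0 = 0`; taking both equal to `2ⁿ x` at
scale `bⁿ u` then gives `N' (fₙ₊₁(x) - fₙ(x)) ((b/4)ⁿ u / 2) ≥ N x (u ^ q)`. Telescoping bounds
`fₙ(x) - f(x)` by a geometric series of ratio `b/4 < 1` (`approx_sub_bound`), and one passes to the
limit `n → ∞`. With `u = (4/b - 1)/2 * t` the series sums to `t / b < t`, and the gap between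
`t / b` and `t` absorbs the error terms of the limit.
-/

open Filter Finset

theorem IsFuzzyNorm.neg_eq_s2 {Y : Type*} [AddCommGroup Y] [Module ℝ Y] {N' : Y → ℝ → ℝ}
    (hN' : IsFuzzyNorm N') (y : Y) (t : ℝ) : N' (-y) t = N' y t := by
  have h := hN'.smul_eq (-1) y t (by norm_num)
  simpa using h

/-- An almost quadratic function vanishes at the origin. -/
theorem almost_quadratic_zero
    {X Y : Type*} [AddCommGroup X] [Module ℝ X] [AddCommGroup Y] [Module ℝ Y]
    {N : X → ℝ → ℝ} {N' : Y → ℝ → ℝ} (hN : IsFuzzyNorm N) (hN' : IsFuzzyNorm N')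
    {q : ℝ} {f : X → Y}
    (hf : ∀ x y : X, ∀ s t : ℝ, 0 ≤ s → 0 ≤ t →
      min (N x (t ^ q)) (N y (s ^ q)) ≤
        N' (f (x + y) + f (x - y) - 2 • f x - 2 • f y) (t + s)) :
    f 0 = 0 := by
  rw [hN'.eq_zero_iff]
  intro c hc
  have h := hf 0 0 c c hc.le hc.le
  rw [(hN.eq_zero_iff 0).1 rfl _ (Real.rpow_pos_of_pos hc q)] at h
  have e : f (0 + 0) + f (0 - 0) - 2 • f 0 - 2 • f 0 = (-2 : ℝ) • f 0 := by
    simp only [add_zero, sub_zero]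
    module
  rw [e, hN'.smul_eq _ _ _ (by norm_num)] at h
  have e2 : (c + c) / |(-2 : ℝ)| = c := by
    rw [abs_neg, abs_of_pos (by norm_num : (0 : ℝ) < 2)]; ring
  rw [e2, min_self] at h
  exact le_antisymm (hN'.le_one _ _) h

/-- One telescoping step, with `b` in the role of `2 ^ (1 / q)`. -/
theorem approx_step_bound
    {X Y : Type*} [AddCommGroup X] [Module ℝ X] [AddCommGroup Y] [Module ℝ Y]
    {N : X → ℝ → ℝ} {N' : Y → ℝ → ℝ} (hN : IsFuzzyNorm N) (hN' : IsFuzzyNorm N')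
    {q b : ℝ} (hb : 0 < b) (hbq : b ^ q = 2) {f : X → Y}
    (hf : ∀ x y : X, ∀ s t : ℝ, 0 ≤ s → 0 ≤ t →
      min (N x (t ^ q)) (N y (s ^ q)) ≤
        N' (f (x + y) + f (x - y) - 2 • f x - 2 • f y) (t + s))
    (x : X) {u : ℝ} (hu : 0 < u) (n : ℕ) :
    N x (u ^ q) ≤ N' (((4 : ℝ) ^ (n + 1))⁻¹ • f (((2 : ℝ) ^ (n + 1)) • x)
      - ((4 : ℝ) ^ n)⁻¹ • f (((2 : ℝ) ^ n) • x)) ((b / 4) ^ n * u / 2) := by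
  have hw : 0 ≤ b ^ n * u := by positivity
  have h := hf ((2 : ℝ) ^ n • x) ((2 : ℝ) ^ n • x) _ _ hw hw
  have hpow : (b ^ n * u) ^ q = 2 ^ n * u ^ q := by
    rw [Real.mul_rpow (by positivity) hu.le, ← Real.rpow_natCast b n, ← Real.rpow_mul hb.le,
      mul_comm (n : ℝ) q, Real.rpow_mul hb.le, hbq, Real.rpow_natCast]
  have hpos : (0 : ℝ) < 2 ^ n := by positivity
  rw [min_self, hpow, hN.smul_eq _ _ _ hpos.ne', abs_of_pos hpos,
    mul_div_cancel_left₀ _ hpos.ne', sub_self, almost_quadratic_zero hN hN' hf, ← add_smul] at h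
  have h4 : (0 : ℝ) < ((4 : ℝ) ^ (n + 1))⁻¹ := by positivity
  have e : ((4 : ℝ) ^ (n + 1))⁻¹ • f (((2 : ℝ) ^ (n + 1)) • x)
      - ((4 : ℝ) ^ n)⁻¹ • f (((2 : ℝ) ^ n) • x) = ((4 : ℝ) ^ (n + 1))⁻¹ •
      (f (((2 : ℝ) ^ n + 2 ^ n) • x) + 0 - 2 • f ((2 : ℝ) ^ n • x) - 2 • f ((2 : ℝ) ^ n • x)) := by
    have e1 : (2 : ℝ) ^ n + 2 ^ n = 2 ^ (n + 1) := by ring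
    have e2 : ((4 : ℝ) ^ n)⁻¹ = ((4 : ℝ) ^ (n + 1))⁻¹ * 4 := by
      rw [pow_succ]; field_simp
    rw [e1, e2]
    module
  rw [e, hN'.smul_eq _ _ _ h4.ne', abs_of_pos h4]
  have e3 : (b / 4) ^ n * u / 2 / ((4 : ℝ) ^ (n + 1))⁻¹ = b ^ n * u + b ^ n * u := by
    rw [div_pow, pow_succ]; field_simp; ring
  rwa [e3]

/-- The telescoped bound, at the scale `u = (4 / b - 1) / 2 * t`. The slack `ε` is needed because
the fuzzy norm of `0` is `0`, not `1`, at `t = 0`, which is the case `n = 0`. -/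
theorem approx_sub_bound
    {X Y : Type*} [AddCommGroup X] [Module ℝ X] [AddCommGroup Y] [Module ℝ Y]
    {N : X → ℝ → ℝ} {N' : Y → ℝ → ℝ} (hN : IsFuzzyNorm N) (hN' : IsFuzzyNorm N')
    {q b : ℝ} (hb : 0 < b) (hb4 : b < 4) (hbq : b ^ q = 2) {f : X → Y}
    (hf : ∀ x y : X, ∀ s t : ℝ, 0 ≤ s → 0 ≤ t →
      min (N x (t ^ q)) (N y (s ^ q)) ≤
        N' (f (x + y) + f (x - y) - 2 • f x - 2 • f y) (t + s))
    (x : X) {t ε : ℝ} (ht : 0 < t) (hε : 0 < ε) (n : ℕ) :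
    N x (((4 / b - 1) / 2 * t) ^ q) ≤ N' (((4 : ℝ) ^ n)⁻¹ • f (((2 : ℝ) ^ n) • x) - f x)
      (t / b * (1 - (b / 4) ^ n) + ε) := by
  have hu : 0 < (4 / b - 1) / 2 * t := by
    have : 1 < 4 / b := by rwa [one_lt_div hb]
    have : 0 < 4 / b - 1 := by linarith
    positivity
  induction n with
  | zero =>
    have h := (hN'.eq_zero_iff 0).1 rfl ε hε
    simp only [pow_zero, inv_one, one_smul, sub_self, mul_zero, zero_add, h]
    exact hN.le_one _ _
  | succ n ih =>
    have h := approx_step_bound hN hN' hb hbq hf x hu n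
    have h2 := (le_min ih h).trans (hN'.min_le_add _ _ _ _)
    have e : t / b * (1 - (b / 4) ^ (n + 1)) + ε = t / b * (1 - (b / 4) ^ n) + ε
        + (b / 4) ^ n * ((4 / b - 1) / 2 * t) / 2 := by
      rw [pow_succ]
      generalize (b / 4) ^ n = z
      field_simp
      ring
    rwa [e, ← sub_add_sub_cancel _ (((4 : ℝ) ^ n)⁻¹ • f (((2 : ℝ) ^ n) • x)) (f x), add_comm (_ - _)]

/-- Remark 2.2: if `N' (Q x - f x)` is right continuous on `(0, ∞)`, then one gets
the better fuzzy approximation with constant `((2^(2-p) - 1)/2)^q`. -/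
theorem fuzzy_stability_quadratic_better_bound
    {X Y : Type*} [AddCommGroup X] [Module ℝ X] [AddCommGroup Y] [Module ℝ Y]
    (N : X → ℝ → ℝ) (N' : Y → ℝ → ℝ)
    (hN : IsFuzzyNorm N) (hN' : IsFuzzyNorm N') (hYcomplete : IsFuzzyComplete N')
    (q p : ℝ) (hq : 1 / 2 < q) (hp : p = 1 / q)
    (f Q : X → Y)
    (hf : ∀ x y : X, ∀ s t : ℝ, 0 ≤ s → 0 ≤ t →
      min (N x (t ^ q)) (N y (s ^ q)) ≤
        N' (f (x + y) + f (x - y) - 2 • f x - 2 • f y) (t + s))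
    (hQquad : IsQuadratic Q)
    (hQlim : ∀ x : X, FuzzyTendsto N' (fun n : ℕ => ((4 : ℝ) ^ n)⁻¹ • f (((2 : ℝ) ^ n) • x)) (Q x))
    (hrc : ∀ x : X, ∀ t : ℝ, 0 < t →
      ContinuousWithinAt (fun s : ℝ => N' (Q x - f x) s) (Set.Ici t) t) :
    ∀ x : X, ∀ t : ℝ, 0 < t →
      N x ((((2 : ℝ) ^ ((2 : ℝ) - p) - 1) / 2) ^ q * t ^ q) ≤ N' (Q x - f x) t := by
  intro x t ht
  have hq0 : 0 < q := by linarith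
  have hp0 : 0 < p := by rw [hp]; positivity
  have hp2 : p < 2 := by rw [hp, div_lt_iff₀ hq0]; linarith
  have hpq : p * q = 1 := by rw [hp]; field_simp
  obtain ⟨b, hbdef⟩ : ∃ b : ℝ, b = (2 : ℝ) ^ p := ⟨_, rfl⟩
  have hb1 : 1 < b := by rw [hbdef]; exact Real.one_lt_rpow (by norm_num) hp0
  have hb : 0 < b := by linarith
  have hb4 : b < 4 := by
    have h : (2 : ℝ) ^ p < (2 : ℝ) ^ (2 : ℝ) := Real.rpow_lt_rpow_of_exponent_lt (by norm_num) hp2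
    rw [hbdef]
    norm_num at h ⊢
    exact h
  have hbq : b ^ q = 2 := by
    rw [hbdef, ← Real.rpow_mul (by norm_num), hpq, Real.rpow_one]
  have ha : (2 : ℝ) ^ ((2 : ℝ) - p) = 4 / b := by
    rw [Real.rpow_sub (by norm_num), hbdef]; norm_num
  have ha0 : 0 ≤ (4 / b - 1) / 2 := by
    have : 1 < 4 / b := by rwa [one_lt_div hb]
    linarith
  rw [ha, ← Real.mul_rpow ha0 ht.le]
  have htb : t / b < t := div_lt_self ht hb1
  -- Half of the gap `t - t / b` is spent on the distance to the limit, half on the slack.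
  obtain ⟨δ, hδ⟩ : ∃ δ : ℝ, δ = (t - t / b) / 2 := ⟨_, rfl⟩
  have hδ0 : 0 < δ := by linarith
  by_contra! hlt
  have hB : N' (Q x - f x) t < 1 := hlt.trans_le (hN.le_one _ _)
  obtain ⟨n, hn⟩ := ((hQlim x δ hδ0).eventually (lt_mem_nhds hB)).exists
  have h1 := approx_sub_bound hN hN' hb hb4 hbq hf x ht hδ0 n
  rw [← hN'.neg_eq_s2 (_ - Q x), neg_sub] at hn
  have h2 := (lt_min hn (hlt.trans_le h1)).trans_le (hN'.min_le_add _ _ _ _)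
  rw [sub_add_sub_cancel] at h2
  refine absurd (h2.trans_le (hN'.mono _ ?_)) (lt_irrefl _)
  have h3 : 0 ≤ t / b * (b / 4) ^ n := by positivity
  linarith
end

section
/- Let X be a real linear space, (Y, N) a fuzzy Banach space, (Z, N′) a fuzzy normed space, and φ : X × X → Z with φ(2x, 2y) = α · φ(x, y) for all x, y ∈ X, where 0 < |α| < 2. Suppose f, g, h : X → Y are odd functions such that N (f(x+y) + f(x−y) − 2g(x) − 2h(y)) t ≥ N′ (φ(x, y)) t for all x, y ∈ X and all t ∈ ℝ. Then there exists a unique additive mapping T : X → Y such that N (f(x) − T(x)) t ≥ N″ x (((2 − |α|)/4) · t) and N (g(x) + h(x) − T(x)) t ≥ N″ x (((6 − 3|α|)/(14 − |α|)) · t) for all x ∈ X and all t > 0. -/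
/-! The oddness of `f`, `g`, `h` gives `f 0 = g 0 = h 0 = 0`. Specialising the functional
inequality at `(x, y)`, `(x, 0)` and `(0, y)` and eliminating `g` and `h` shows that
`f (x + y) + f (x - y) - 2 f x` is controlled by `φ (x, y)`, `φ (x, 0)`, `φ (0, y)`; for `y = x`
this says that `f (2x) - 2 f x` is controlled by `Ndd N' φ x`. Since `φ` scales by `α` under
doubling and `|α| < 2`, the Hyers sequence `2⁻ⁿ f (2ⁿ x)` moves at step `n` by a quantity of
geometric size `(|α| / 2)ⁿ`, so it is Cauchy and has a limit `T x` within the required distance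
of `f x` (`hyers_bound`). The limit satisfies `T (x + y) + T (x - y) = 2 T x`, which makes it
additive. The estimate for `g + h` comes from `2 (g x + h x) ≈ f (2x) ≈ 2 T x`. Uniqueness holds
because two additive maps within `Ndd` of `f` differ at `x` by `2⁻ⁿ` times their difference at
`2ⁿ x`, which tends to `0`. -/

open Filter Finset

/-- The control function `N″ x t = min {N′(φ(x,x))(t/3), N′(φ(x,0))(t/3), N′(φ(0,x))(t/3)}`. -/
noncomputable def Ndd {X Z : Type*} [Zero X] (N' : Z → ℝ → ℝ) (φ : X × X → Z) (x : X) (t : ℝ) : ℝ :=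
  min (min (N' (φ (x, x)) (t / 3)) (N' (φ (x, 0)) (t / 3))) (N' (φ (0, x)) (t / 3))

namespace IsFuzzyNorm

variable {V : Type*} [AddCommGroup V] [Module ℝ V] {N : V → ℝ → ℝ}

lemma map_zero (hN : IsFuzzyNorm N) {t : ℝ} (ht : 0 < t) : N 0 t = 1 :=
  (hN.eq_zero_iff 0).1 rfl t ht

lemma map_neg_s4 (hN : IsFuzzyNorm N) (x : V) (t : ℝ) : N (-x) t = N x t := by
  have := hN.smul_eq (-1) x t (by norm_num)
  simpa using this

lemma map_sub_comm (hN : IsFuzzyNorm N) (x y : V) (t : ℝ) : N (x - y) t = N (y - x) t := by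
  rw [← hN.map_neg_s4, neg_sub]

lemma le_map_add (hN : IsFuzzyNorm N) {x y : V} {b s t : ℝ} (hx : b ≤ N x s) (hy : b ≤ N y t) :
    b ≤ N (x + y) (s + t) :=
  (le_min hx hy).trans (hN.min_le_add x y s t)

lemma smul_mul (hN : IsFuzzyNorm N) {c : ℝ} (hc : 0 < c) (x : V) (t : ℝ) :
    N (c • x) (c * t) = N x t := by
  rw [hN.smul_eq c x _ hc.ne', abs_of_pos hc, mul_div_cancel_left₀ _ hc.ne']

/-- A lower bound on the fuzzy norm passes to the limit at the cost of an arbitrarily small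
enlargement of the parameter; no continuity of `N x` is assumed. -/
lemma le_of_tendsto (hN : IsFuzzyNorm N) {xs : ℕ → V} {x y : V} (hx : FuzzyTendsto N xs x)
    {b s t : ℝ} (ht : 0 < t) (hb : ∀ n, b ≤ N (xs n - y) s) : b ≤ N (x - y) (s + t) := by
  have hlim : Tendsto (fun n => min b (N (xs n - x) t)) atTop (nhds (min b 1)) :=
    tendsto_const_nhds.min (hx t ht)
  have hb1 : b ≤ 1 := (hb 0).trans (hN.le_one _ _)
  rw [min_eq_left hb1] at hlim
  refine le_of_tendsto' hlim fun n => ?_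
  have := hN.le_map_add (x := xs n - y) (y := x - xs n) (b := min b (N (xs n - x) t)) (s := s)
    (t := t) ((min_le_left _ _).trans (hb n))
    ((min_le_right _ _).trans (hN.map_sub_comm _ _ _).le)
  rwa [show xs n - y + (x - xs n) = x - y by abel] at this

lemma tendsto_add (hN : IsFuzzyNorm N) {xs ys : ℕ → V} {x y : V} (hx : FuzzyTendsto N xs x)
    (hy : FuzzyTendsto N ys y) : FuzzyTendsto N (fun n => xs n + ys n) (x + y) := by
  intro t ht
  have hlim := (hx (t / 2) (half_pos ht)).min (hy (t / 2) (half_pos ht))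
  rw [min_self] at hlim
  refine tendsto_of_tendsto_of_tendsto_of_le_of_le hlim tendsto_const_nhds (fun n => ?_)
    fun n => hN.le_one _ _
  have := hN.min_le_add (xs n - x) (ys n - y) (t / 2) (t / 2)
  rwa [add_halves, show xs n - x + (ys n - y) = xs n + ys n - (x + y) by abel] at this

lemma tendsto_smul (hN : IsFuzzyNorm N) {xs : ℕ → V} {x : V} (hx : FuzzyTendsto N xs x)
    {c : ℝ} (hc : c ≠ 0) : FuzzyTendsto N (fun n => c • xs n) (c • x) := by
  intro t ht
  simp_rw [← smul_sub, hN.smul_eq c _ _ hc]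
  exact hx _ (div_pos ht (abs_pos.2 hc))

lemma eq_of_tendsto (hN : IsFuzzyNorm N) {xs : ℕ → V} {x y : V} (hx : FuzzyTendsto N xs x)
    (hy : FuzzyTendsto N xs y) : x = y := by
  rw [← sub_eq_zero, hN.eq_zero_iff]
  intro c hc
  have h0 := hN.tendsto_add hx (hN.tendsto_smul hy (c := -1) (by norm_num)) c hc
  have h1 : ∀ n, N (xs n + (-1 : ℝ) • xs n - (x + (-1 : ℝ) • y)) c = N (x - y) c := fun n => by
    rw [← hN.map_neg_s4]; congr 1; module
  simp_rw [h1] at h0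
  exact tendsto_nhds_unique tendsto_const_nhds h0

end IsFuzzyNorm

section Control

variable {X Z : Type*} [AddCommGroup X] [Module ℝ X] [AddCommGroup Z] [Module ℝ Z]
  {N' : Z → ℝ → ℝ} {φ : X × X → Z} {α : ℝ}

lemma control_pow (hφ : ∀ x y : X, φ (2 • x, 2 • y) = α • φ (x, y)) (n : ℕ) (x y : X) :
    φ ((2 : ℝ) ^ n • x, (2 : ℝ) ^ n • y) = α ^ n • φ (x, y) := by
  induction n with
  | zero => simp
  | succ n ih =>
    have h2 : ∀ z : X, (2 : ℝ) ^ (n + 1) • z = 2 • ((2 : ℝ) ^ n • z) := fun z => by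
      rw [pow_succ]; module
    rw [h2, h2, hφ, ih, smul_smul, pow_succ']

lemma control_pow_apply (hN' : IsFuzzyNorm N') (hα0 : 0 < |α|)
    (hφ : ∀ x y : X, φ (2 • x, 2 • y) = α • φ (x, y)) (n : ℕ) (x y : X) (t : ℝ) :
    N' (φ ((2 : ℝ) ^ n • x, (2 : ℝ) ^ n • y)) t = N' (φ (x, y)) (t / |α| ^ n) := by
  rw [control_pow hφ, hN'.smul_eq _ _ _ (pow_ne_zero _ (abs_pos.1 hα0)), abs_pow]

lemma Ndd_pow (hN' : IsFuzzyNorm N') (hα0 : 0 < |α|)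
    (hφ : ∀ x y : X, φ (2 • x, 2 • y) = α • φ (x, y)) (n : ℕ) (x : X) (t : ℝ) :
    Ndd N' φ ((2 : ℝ) ^ n • x) t = Ndd N' φ x (t / |α| ^ n) := by
  have h := control_pow_apply hN' hα0 hφ n
  have h1 := h x x (t / 3)
  have h2 := h x 0 (t / 3)
  have h3 := h 0 x (t / 3)
  rw [smul_zero] at h2 h3
  simp only [Ndd, h1, h2, h3, div_right_comm]

end Control

lemma Ndd_le_one {X Z : Type*} [AddCommGroup X] [AddCommGroup Z] [Module ℝ Z]
    {N' : Z → ℝ → ℝ} {φ : X × X → Z}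
    (hN' : IsFuzzyNorm N') (x : X) (t : ℝ) : Ndd N' φ x t ≤ 1 :=
  (min_le_right _ _).trans (hN'.le_one _ _)

lemma Ndd_tendsto {X Z : Type*} [AddCommGroup X] [AddCommGroup Z] [Module ℝ Z]
    {N' : Z → ℝ → ℝ} {φ : X × X → Z}
    (hN' : IsFuzzyNorm N') (x : X) : Tendsto (Ndd N' φ x) atTop (nhds 1) := by
  have h3 : Tendsto (fun t : ℝ => t / 3) atTop atTop := tendsto_id.atTop_div_const (by norm_num)
  have h := fun z => (hN'.tendsto_one z).comp h3
  simpa only [Function.comp_def, min_self] using! ((h (φ (x, x))).min (h (φ (x, 0)))).min (h (φ (0, x)))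

lemma tendsto_mul_two_pow_div {a c : ℝ} (ha0 : 0 < a) (ha2 : a < 2) (hc : 0 < c) :
    Tendsto (fun n : ℕ => c * 2 ^ n / a ^ n) atTop atTop := by
  have : Tendsto (fun n : ℕ => c * (2 / a) ^ n) atTop atTop :=
    (tendsto_pow_atTop_atTop_of_one_lt ((one_lt_div ha0).2 ha2)).const_mul_atTop hc
  simpa [div_pow, mul_div_assoc] using this

/-- The total displacement of the Hyers sequence after step `n`, by summing a geometric series of
ratio `|α| / 2`. The constant is twice the sum of the series, which leaves a positive parameter
also for `p = 0`. -/
lemma hyers_bound {X Y Z : Type*} [AddCommGroup X] [Module ℝ X]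
    [AddCommGroup Y] [Module ℝ Y] [AddCommGroup Z] [Module ℝ Z]
    {N : Y → ℝ → ℝ} {N' : Z → ℝ → ℝ} (hN : IsFuzzyNorm N) (hN' : IsFuzzyNorm N')
    {α : ℝ} (hα0 : 0 < |α|) (hα2 : |α| < 2) {φ : X × X → Z}
    (hφ : ∀ x y : X, φ (2 • x, 2 • y) = α • φ (x, y)) {f : X → Y}
    (hf : ∀ x t, Ndd N' φ x t ≤ N (f ((2 : ℝ) • x) - (2 : ℝ) • f x) t)
    (x : X) {s : ℝ} (hs : 0 < s) (n p : ℕ) :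
    Ndd N' φ x s ≤ N (((2 : ℝ) ^ (n + p))⁻¹ • f ((2 : ℝ) ^ (n + p) • x)
      - ((2 : ℝ) ^ n)⁻¹ • f ((2 : ℝ) ^ n • x)) (2 * s / (2 - |α|) * (|α| / 2) ^ n) := by
  have hpos : 0 < 2 - |α| := by linarith
  have hr : 0 < |α| / 2 := by positivity
  have step : ∀ m : ℕ, Ndd N' φ x s ≤ N (((2 : ℝ) ^ (m + 1))⁻¹ • f ((2 : ℝ) ^ (m + 1) • x)
      - ((2 : ℝ) ^ m)⁻¹ • f ((2 : ℝ) ^ m • x)) (s / 2 * (|α| / 2) ^ m) := by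
    intro m
    have h1 := hf ((2 : ℝ) ^ m • x) (s * |α| ^ m)
    rw [Ndd_pow hN' hα0 hφ, mul_div_cancel_right₀ _ (pow_pos hα0 m).ne', smul_smul,
      ← pow_succ', ← hN.smul_mul (c := ((2 : ℝ) ^ (m + 1))⁻¹) (by positivity)] at h1
    convert h1 using 2
    · rw [smul_sub, smul_smul]
      congr 2
      rw [pow_succ]; field_simp
    · rw [pow_succ, div_pow]; field_simp
  have key : ∀ p : ℕ, Ndd N' φ x s ≤ N (((2 : ℝ) ^ (n + p))⁻¹ • f ((2 : ℝ) ^ (n + p) • x)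
      - ((2 : ℝ) ^ n)⁻¹ • f ((2 : ℝ) ^ n • x))
        (s / (2 - |α|) * (|α| / 2) ^ n * (2 - (|α| / 2) ^ p)) := by
    intro p
    induction p with
    | zero =>
      rw [add_zero, sub_self, hN.map_zero (by norm_num; positivity)]
      exact Ndd_le_one hN' _ _
    | succ p ih =>
      have h2 := hN.le_map_add ih (step (n + p))
      convert h2 using 2
      · rw [← add_assoc]; abel
      · rw [pow_add, pow_succ]; field_simp; ring
  refine (key p).trans (hN.mono _ ?_)
  have : 0 < s / (2 - |α|) * (|α| / 2) ^ n := by positivity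
  have h3 : 0 < (|α| / 2) ^ p := by positivity
  calc _ ≤ s / (2 - |α|) * (|α| / 2) ^ n * 2 := by gcongr; linarith
    _ = _ := by ring

/-- Proposition 3.1: fuzzy stability of the Pexiderized quadratic equation for
odd functions; one obtains a unique additive mapping `T`. -/
theorem fuzzy_stability_pexider_odd
    {X Y Z : Type*} [AddCommGroup X] [Module ℝ X]
    [AddCommGroup Y] [Module ℝ Y] [AddCommGroup Z] [Module ℝ Z]
    (N : Y → ℝ → ℝ) (N' : Z → ℝ → ℝ)
    (hN : IsFuzzyNorm N) (hYcomplete : IsFuzzyComplete N) (hN' : IsFuzzyNorm N')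
    (α : ℝ) (hα0 : 0 < |α|) (hα2 : |α| < 2)
    (φ : X × X → Z)
    (hφ : ∀ x y : X, φ (2 • x, 2 • y) = α • φ (x, y))
    (f g h : X → Y)
    (hfodd : ∀ x : X, f (-x) = -f x)
    (hgodd : ∀ x : X, g (-x) = -g x)
    (hhodd : ∀ x : X, h (-x) = -h x)
    (hineq : ∀ x y : X, ∀ t : ℝ,
      N' (φ (x, y)) t ≤ N (f (x + y) + f (x - y) - 2 • g x - 2 • h y) t) :
    ∃! T : X → Y, IsAdditive T ∧
      (∀ x : X, ∀ t : ℝ, 0 < t →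
        Ndd N' φ x ((2 - |α|) / 4 * t) ≤ N (f x - T x) t) ∧
      (∀ x : X, ∀ t : ℝ, 0 < t →
        Ndd N' φ x ((6 - 3 * |α|) / (14 - |α|) * t) ≤ N (g x + h x - T x) t) := by
  have zero_of_odd : ∀ k : X → Y, (∀ x, k (-x) = -k x) → k 0 = 0 := fun k hk => by
    have h1 := hk 0
    rw [neg_zero] at h1
    have h2 : (2 : ℝ) • k 0 = 0 := by rw [two_smul]; nth_rw 1 [h1]; simp
    simpa using h2
  have hf0 := zero_of_odd f hfodd
  have hg0 := zero_of_odd g hgodd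
  have hh0 := zero_of_odd h hhodd
  have hpos : 0 < 2 - |α| := by linarith
  -- Jensen-type defect of `f` alone, after eliminating `g` (from `y = 0`) and `h` (from `x = 0`)
  have hD : ∀ x y t, min (min (N' (φ (x, y)) (t / 3)) (N' (φ (x, 0)) (t / 3)))
      (N' (φ (0, y)) (t / 3)) ≤ N (f (x + y) + f (x - y) - (2 : ℝ) • f x) t := by
    intro x y t
    have h1 := hineq x y (t / 3)
    have h2 := hineq x 0 (t / 3)
    have h3 := hineq 0 y (t / 3)
    rw [← hN.map_neg_s4] at h2 h3
    set b := min (min (N' (φ (x, y)) (t / 3)) (N' (φ (x, 0)) (t / 3))) (N' (φ (0, y)) (t / 3))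
    have h4 := hN.le_map_add (b := b) (hN.le_map_add
      (((min_le_left _ _).trans (min_le_left _ _)).trans h1)
      (((min_le_left _ _).trans (min_le_right _ _)).trans h2)) ((min_le_right _ _).trans h3)
    convert h4 using 2
    · simp only [zero_add, zero_sub, add_zero, sub_zero, hg0, hh0, hfodd]
      module
    · ring
  have hf2 : ∀ x t, Ndd N' φ x t ≤ N (f ((2 : ℝ) • x) - (2 : ℝ) • f x) t := by
    intro x t
    have := hD x x t
    rwa [sub_self, hf0, add_zero, ← two_smul ℝ x] at this
  have hbound := hyers_bound hN hN' hα0 hα2 hφ hf2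
  have hlim : ∀ x, ∃ y, FuzzyTendsto N (fun n => ((2 : ℝ) ^ n)⁻¹ • f ((2 : ℝ) ^ n • x)) y := by
    intro x
    apply hYcomplete
    intro ε hε t ht
    have h1 := (Ndd_tendsto (φ := φ) hN' x).comp
      (tendsto_mul_two_pow_div (c := (2 - |α|) / 2 * t) hα0 hα2 (by positivity))
    obtain ⟨n₀, hn₀⟩ := eventually_atTop.1 (h1.eventually_const_lt (u := 1 - ε) (by linarith))
    refine ⟨n₀, fun n hn p _ => (hn₀ n hn).trans_le ?_⟩
    have h2 := hbound x (s := (2 - |α|) / 2 * t * 2 ^ n / |α| ^ n) (by positivity) n p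
    refine h2.trans_eq (congrArg _ ?_)
    rw [div_pow]; field_simp
  choose T hT using hlim
  have hfT : ∀ x : X, ∀ t : ℝ, 0 < t → Ndd N' φ x ((2 - |α|) / 4 * t) ≤ N (f x - T x) t := by
    intro x t ht
    have h1 := hN.le_of_tendsto (hT x) (y := f x) (s := t / 2) (t := t / 2) (half_pos ht)
      (b := Ndd N' φ x ((2 - |α|) / 4 * t)) (fun n => by
        have h2 := hbound x (s := (2 - |α|) / 4 * t) (by positivity) 0 n
        simp only [zero_add, pow_zero, inv_one, one_smul, mul_one] at h2
        convert h2 using 2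
        field_simp; norm_num)
    rwa [add_halves, hN.map_sub_comm] at h1
  have hJ : ∀ x y, T (x + y) + T (x - y) = (2 : ℝ) • T x := by
    intro x y
    have h1 := hN.tendsto_add (hN.tendsto_add (hT (x + y)) (hT (x - y)))
      (hN.tendsto_smul (hT x) (c := -2) (by norm_num))
    have h2 : FuzzyTendsto N (fun n => ((2 : ℝ) ^ n)⁻¹ • f ((2 : ℝ) ^ n • (x + y))
        + ((2 : ℝ) ^ n)⁻¹ • f ((2 : ℝ) ^ n • (x - y))
        + (-2 : ℝ) • ((2 : ℝ) ^ n)⁻¹ • f ((2 : ℝ) ^ n • x)) 0 := by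
      intro t ht
      have ht3 := tendsto_mul_two_pow_div (c := t / 3) hα0 hα2 (by positivity)
      have h3 := fun z => (hN'.tendsto_one z).comp ht3
      have h4 := ((h3 (φ (x, y))).min (h3 (φ (x, 0)))).min (h3 (φ (0, y)))
      simp only [min_self] at h4
      refine tendsto_of_tendsto_of_tendsto_of_le_of_le h4 tendsto_const_nhds (fun n => ?_)
        fun n => hN.le_one _ _
      have h5 := hD ((2 : ℝ) ^ n • x) ((2 : ℝ) ^ n • y) (t * 2 ^ n)
      have c1 := control_pow_apply hN' hα0 hφ n x y (t * 2 ^ n / 3)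
      have c2 := control_pow_apply hN' hα0 hφ n x 0 (t * 2 ^ n / 3)
      have c3 := control_pow_apply hN' hα0 hφ n 0 y (t * 2 ^ n / 3)
      rw [smul_zero] at c2 c3
      rw [c1, c2, c3, ← hN.smul_mul (c := ((2 : ℝ) ^ n)⁻¹) (by positivity),
        ← smul_add, ← smul_sub] at h5
      simp only [Function.comp_apply]
      rw [show t / 3 * 2 ^ n / |α| ^ n = t * 2 ^ n / 3 / |α| ^ n by ring]
      refine h5.trans_eq (congrArg₂ N ?_ ?_)
      · module
      · field_simp
    have h3 := hN.eq_of_tendsto h1 h2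
    rw [← sub_eq_zero, ← h3]
    module
  have hT0 : T 0 = 0 := by
    refine hN.eq_of_tendsto (hT 0) fun t ht => ?_
    simp [hf0, hN.map_zero ht]
  have hT2 : ∀ x, T ((2 : ℝ) • x) = (2 : ℝ) • T x := fun x => by
    rw [← hJ x x, sub_self, hT0, add_zero, two_smul]
  have hadd : IsAdditive T := by
    intro x y
    have h1 := hJ ((2 : ℝ)⁻¹ • (x + y)) ((2 : ℝ)⁻¹ • (x - y))
    rw [← hT2] at h1
    convert h1.symm using 2
    · module
    · congr 1; module
    · congr 1; module
  have add_pow : ∀ S : X → Y, IsAdditive S → ∀ (n : ℕ) x,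
      S ((2 : ℝ) ^ n • x) = (2 : ℝ) ^ n • S x := by
    intro S hS n x
    induction n with
    | zero => simp
    | succ n ih => rw [pow_succ', mul_smul, two_smul, hS, ih, mul_smul, two_smul]
  refine ⟨T, ⟨hadd, hfT, ?_⟩, ?_⟩
  · intro x t ht
    have h14 : 0 < 14 - |α| := by linarith
    set s := (6 - 3 * |α|) / (14 - |α|) * t with hs
    have hs0 : 0 < s := mul_pos (div_pos (by linarith) h14) ht
    -- `g x + h x` is close to `f (2x) / 2`
    have h1 : Ndd N' φ x s ≤ N (g x + h x - (2 : ℝ)⁻¹ • f ((2 : ℝ) • x)) (2⁻¹ * (s / 3)) := by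
      have h2 := ((min_le_left _ _).trans (min_le_left _ _)).trans (hineq x x (s / 3))
        (a := Ndd N' φ x s)
      rw [← hN.map_neg_s4, ← hN.smul_mul (c := (2 : ℝ)⁻¹) (by positivity)] at h2
      refine h2.trans_eq (congrArg₂ N ?_ rfl)
      rw [sub_self, hf0, two_smul ℝ x]
      module
    -- `f (2x) / 2` is close to `T (2x) / 2 = T x`
    have h3 : Ndd N' φ x s ≤ N ((2 : ℝ)⁻¹ • f ((2 : ℝ) • x) - T x)
        (2⁻¹ * (4 * (|α| * s) / (2 - |α|))) := by
      have h4 := hfT ((2 : ℝ) • x) (4 * (|α| * s) / (2 - |α|)) (by positivity)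
      have h5 := Ndd_pow hN' hα0 hφ 1 x (|α| * s)
      rw [pow_one, pow_one, mul_div_cancel_left₀ _ hα0.ne'] at h5
      rw [show (2 - |α|) / 4 * (4 * (|α| * s) / (2 - |α|)) = |α| * s by field_simp, h5,
        ← hN.smul_mul (c := (2 : ℝ)⁻¹) (by positivity), hT2] at h4
      convert h4 using 2
      module
    have h6 := hN.le_map_add h1 h3
    rw [sub_add_sub_cancel] at h6
    refine h6.trans (hN.mono _ ?_)
    have hts : t = (14 - |α|) * s / (3 * (2 - |α|)) := by
      rw [hs]; field_simp; ring
    rw [hts, le_div_iff₀ (by positivity)]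
    have : (2⁻¹ * (s / 3) + 2⁻¹ * (4 * (|α| * s) / (2 - |α|))) * (3 * (2 - |α|))
        = s * (2 + 11 * |α|) / 2 := by field_simp; ring
    rw [this]
    nlinarith
  · rintro S ⟨hS, hfS, -⟩
    funext x
    rw [← sub_eq_zero, hN.eq_zero_iff]
    intro c hc
    have h1 := (Ndd_tendsto (φ := φ) hN' x).comp
      (tendsto_mul_two_pow_div (c := (2 - |α|) / 4 * (c / 2)) hα0 hα2 (by positivity))
    refine le_antisymm (hN.le_one _ _) (le_of_tendsto' h1 fun n => ?_)
    have hp : 0 < 2 ^ n * (c / 2) := by positivity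
    have h2 := hfS ((2 : ℝ) ^ n • x) _ hp
    have h3 := hfT ((2 : ℝ) ^ n • x) _ hp
    rw [hN.map_sub_comm] at h2
    have h4 := hN.le_map_add h2 h3
    rw [sub_add_sub_cancel, add_pow S hS, add_pow T hadd, ← smul_sub, ← mul_add, add_halves,
      hN.smul_mul (by positivity), Ndd_pow hN' hα0 hφ] at h4
    refine (congrArg (Ndd N' φ x) ?_).trans_le h4
    ring
end

section
/- Let q > 1/2 and let f be a fuzzy q-almost quadratic function from a fuzzy normed space (X, N) to a fuzzy normed space (Y, N′). Then for every x ∈ X the sequence {f(2^n x)/4^n} is a Cauchy sequence in (Y, N′). -/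
/-!
Putting `y = x` in the almost quadratic inequality (and using `f 0 = 0`, which is the case
`x = y = 0`) gives `N' (f (2x) - 4 f x) (2s) ≥ N x (s ^ q)`. Replacing `x` by `2 ^ n • x` and taking
`s = 2 ^ (n / q) * r`, so that the factor `2 ^ n` cancels, shows that consecutive terms of
`f (2 ^ n x) / 4 ^ n` are close at scale `a ^ n * r / 2` with degree at least `N x (r ^ q)`,
where `a = 2 ^ (1 / q) / 4`. Since `q > 1 / 2`, `a < 1`, so these scales are summable; the degree
`N x (r ^ q)` is independent of `n` and is close to `1` for large `r`.
-/

open Filter Finset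

/-- Telescoping: if consecutive terms are within scale `C * (a ^ n - a ^ (n + 1))` to degree `δ`,
then so are all later terms, within the summed scale. -/
lemma IsFuzzyNorm.telescope {Y : Type*} [AddCommGroup Y] [Module ℝ Y] {N : Y → ℝ → ℝ}
    (hN : IsFuzzyNorm N) (u : ℕ → Y) (a C δ : ℝ)
    (h : ∀ n, δ ≤ N (u (n + 1) - u n) (C * (a ^ n - a ^ (n + 1)))) (n p : ℕ) :
    δ ≤ N (u (n + (p + 1)) - u n) (C * (a ^ n - a ^ (n + (p + 1)))) := by
  induction p with
  | zero => exact h n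
  | succ p ih =>
    have h1 := (le_min (h (n + (p + 1))) ih).trans (hN.min_le_add _ _ _ _)
    rw [sub_add_sub_cancel, ← mul_add, sub_add_sub_cancel'] at h1
    exact h1

section AlmostQuadratic

variable {X Y : Type*} [AddCommGroup X] [Module ℝ X] [AddCommGroup Y] [Module ℝ Y]
  {N : X → ℝ → ℝ} {N' : Y → ℝ → ℝ} {q : ℝ} {f : X → Y}

lemma almostQuadratic_map_zero (hN : IsFuzzyNorm N) (hN' : IsFuzzyNorm N')
    (hf : ∀ x y : X, ∀ s t : ℝ, 0 ≤ s → 0 ≤ t →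
      min (N x (t ^ q)) (N y (s ^ q)) ≤
        N' (f (x + y) + f (x - y) - 2 • f x - 2 • f y) (t + s)) : f 0 = 0 := by
  have h0 : f (0 + 0) + f (0 - 0) - 2 • f 0 - 2 • f 0 = 0 := by
    rw [hN'.eq_zero_iff]
    intro c hc
    refine le_antisymm (hN'.le_one _ _) ?_
    have h := hf 0 0 (c / 2) (c / 2) (by positivity) (by positivity)
    have h1 := (hN.eq_zero_iff (0 : X)).1 rfl ((c / 2) ^ q) (by positivity)
    rwa [h1, min_self, add_halves] at h
  have h2 : (2 : ℝ) • f 0 = 0 := by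
    rw [two_smul, ← neg_eq_zero, ← h0, add_zero, sub_zero]; abel
  simpa using h2

lemma almostQuadratic_doubling (hN : IsFuzzyNorm N) (hN' : IsFuzzyNorm N')
    (hf : ∀ x y : X, ∀ s t : ℝ, 0 ≤ s → 0 ≤ t →
      min (N x (t ^ q)) (N y (s ^ q)) ≤
        N' (f (x + y) + f (x - y) - 2 • f x - 2 • f y) (t + s)) (x : X) {s : ℝ} (hs : 0 ≤ s) :
    N x (s ^ q) ≤ N' (f ((2 : ℝ) • x) - (4 : ℝ) • f x) (2 * s) := by
  have h := hf x x s s hs hs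
  rw [min_self, sub_self, almostQuadratic_map_zero hN hN' hf] at h
  convert h using 2
  · rw [two_smul]; module
  · ring

lemma almostQuadratic_step (hN : IsFuzzyNorm N) (hN' : IsFuzzyNorm N') (hq : 0 < q)
    (hf : ∀ x y : X, ∀ s t : ℝ, 0 ≤ s → 0 ≤ t →
      min (N x (t ^ q)) (N y (s ^ q)) ≤
        N' (f (x + y) + f (x - y) - 2 • f x - 2 • f y) (t + s))
    (x : X) {r : ℝ} (hr : 0 ≤ r) (n : ℕ) :
    N x (r ^ q) ≤ N' (((4 : ℝ) ^ (n + 1))⁻¹ • f (((2 : ℝ) ^ (n + 1)) • x) -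
      ((4 : ℝ) ^ n)⁻¹ • f (((2 : ℝ) ^ n) • x)) (((2 : ℝ) ^ (1 / q) / 4) ^ n * r / 2) := by
  have hs : 0 ≤ ((2 : ℝ) ^ (1 / q)) ^ n * r := by positivity
  have h := almostQuadratic_doubling hN hN' hf ((2 : ℝ) ^ n • x) hs
  have hpow : (((2 : ℝ) ^ (1 / q)) ^ n * r) ^ q = 2 ^ n * r ^ q := by
    rw [Real.mul_rpow (by positivity) hr, ← Real.rpow_natCast, ← Real.rpow_mul (by positivity),
      ← Real.rpow_mul (by positivity), ← Real.rpow_natCast]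
    congr 2
    field_simp
  rw [hN.smul_eq _ _ _ (by positivity), hpow, abs_of_pos (by positivity),
    mul_div_cancel_left₀ _ (by positivity)] at h
  have e : ((4 : ℝ) ^ (n + 1))⁻¹ • f (((2 : ℝ) ^ (n + 1)) • x) -
      ((4 : ℝ) ^ n)⁻¹ • f (((2 : ℝ) ^ n) • x) = ((4 : ℝ) ^ (n + 1))⁻¹ •
      (f ((2 : ℝ) • (2 : ℝ) ^ n • x) - (4 : ℝ) • f ((2 : ℝ) ^ n • x)) := by
    rw [smul_sub, smul_smul, smul_smul, ← pow_succ']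
    congr 2
    field_simp
    ring
  rw [e, hN'.smul_eq _ _ _ (by positivity), abs_of_pos (by positivity)]
  convert h using 2
  rw [div_pow]
  field_simp
  ring

end AlmostQuadratic

/-- For a fuzzy `q`-almost quadratic function with `q > 1/2`, the sequence
`f(2^n x)/4^n` is Cauchy in the fuzzy normed space `(Y, N')`. -/
theorem fuzzy_quadratic_cauchy
    {X Y : Type*} [AddCommGroup X] [Module ℝ X] [AddCommGroup Y] [Module ℝ Y]
    (N : X → ℝ → ℝ) (N' : Y → ℝ → ℝ)
    (hN : IsFuzzyNorm N) (hN' : IsFuzzyNorm N')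
    (q : ℝ) (hq : 1 / 2 < q)
    (f : X → Y)
    (hf : ∀ x y : X, ∀ s t : ℝ, 0 ≤ s → 0 ≤ t →
      min (N x (t ^ q)) (N y (s ^ q)) ≤
        N' (f (x + y) + f (x - y) - 2 • f x - 2 • f y) (t + s)) :
    ∀ x : X, FuzzyCauchy N' (fun n : ℕ => ((4 : ℝ) ^ n)⁻¹ • f (((2 : ℝ) ^ n) • x)) := by
  intro x ε hε t ht
  have hq0 : 0 < q := by linarith
  set a : ℝ := (2 : ℝ) ^ (1 / q) / 4 with ha
  have ha0 : 0 ≤ a := by positivity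
  have ha1 : a < 1 := by
    have h2 : (2 : ℝ) ^ (1 / q) < 2 ^ (2 : ℝ) := by
      apply Real.rpow_lt_rpow_of_exponent_lt (by norm_num)
      rw [div_lt_iff₀ hq0]; linarith
    norm_num at h2
    rw [ha]; norm_num; linarith
  obtain ⟨r, hrN, hr⟩ : ∃ r : ℝ, 1 - ε < N x (r ^ q) ∧ 0 ≤ r :=
    ((((hN.tendsto_one x).comp (tendsto_rpow_atTop hq0)).eventually_const_lt
      (by linarith : 1 - ε < 1)).and (eventually_ge_atTop 0)).exists
  have h1a : 0 < 1 - a := by linarith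
  -- `C` is chosen so that `C * (a ^ n - a ^ (n + 1)) = a ^ n * r / 2`.
  set C : ℝ := r / (2 * (1 - a)) with hC
  have hC0 : 0 ≤ C := by positivity
  have hlim : Tendsto (fun n : ℕ => C * a ^ n) atTop (nhds 0) := by
    simpa using (tendsto_pow_atTop_nhds_zero_of_lt_one ha0 ha1).const_mul C
  obtain ⟨n₀, hn₀⟩ := eventually_atTop.1 (hlim.eventually_lt_const ht)
  refine ⟨n₀, fun n hn p hp => hrN.trans_le ?_⟩
  obtain ⟨p, rfl⟩ := Nat.exists_eq_succ_of_ne_zero hp.ne'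
  refine (hN'.telescope (fun n : ℕ => ((4 : ℝ) ^ n)⁻¹ • f (((2 : ℝ) ^ n) • x)) a C _
    (fun m => ?_) n p).trans (hN'.mono _ ?_)
  · convert almostQuadratic_step hN hN' hq0 hf x hr m using 2
    rw [← ha, hC]
    field_simp
    ring
  · have := mul_nonneg hC0 (pow_nonneg ha0 (n + (p + 1)))
    have := hn₀ n hn
    linarith
end

section
/- Let X be a real linear space, (Y, N) a fuzzy normed space, (Z, N′) a fuzzy normed space, and φ : X × X → Z. Suppose f, g, h : X → Y are odd functions such that N (f(x+y) + f(x−y) − 2g(x) − 2h(y)) t ≥ N′ (φ(x, y)) t for all x, y ∈ X and all t ∈ ℝ. Then for all x ∈ X and t > 0, N (f(x) − g(x) − h(x)) t ≥ min {N′ (φ(x, 0)) t, N′ (φ(0, x)) t}. -/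
/-!
Odd maps into a real vector space vanish at `0`. Hence the hypothesis at `(x, 0)` bounds the fuzzy
norm of `2 (f x - g x)`, and at `(0, x)`, where `f x + f (-x) = 0`, that of `-2 h x`. By homogeneity
these are bounds for `f x - g x` and `-h x` at `t / 2`, and the fuzzy triangle inequality adds the
two halves up to the bound for `f x - g x - h x` at `t`.
-/

open Filter Finset

/-- Estimate (3.4) in the proof of Proposition 3.1. -/
theorem fuzzy_pexider_odd_diff
    {X Y Z : Type*} [AddCommGroup X] [Module ℝ X]
    [AddCommGroup Y] [Module ℝ Y] [AddCommGroup Z] [Module ℝ Z]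
    (N : Y → ℝ → ℝ) (N' : Z → ℝ → ℝ)
    (hN : IsFuzzyNorm N) (hN' : IsFuzzyNorm N')
    (φ : X × X → Z)
    (f g h : X → Y)
    (hfodd : ∀ x : X, f (-x) = -f x)
    (hgodd : ∀ x : X, g (-x) = -g x)
    (hhodd : ∀ x : X, h (-x) = -h x)
    (hineq : ∀ x y : X, ∀ t : ℝ,
      N' (φ (x, y)) t ≤ N (f (x + y) + f (x - y) - 2 • g x - 2 • h y) t) :
    ∀ x : X, ∀ t : ℝ, 0 < t →
      min (N' (φ (x, 0)) t) (N' (φ (0, x)) t) ≤ N (f x - g x - h x) t := by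
  intro x t _
  have odd_zero : ∀ k : X → Y, (∀ x, k (-x) = -k x) → k 0 = 0 := by
    intro k hk
    have h0 : k 0 = -k 0 := by simpa using hk 0
    have h2 : (2 : ℝ) • k 0 = 0 := by
      rw [two_smul]
      exact add_eq_zero_iff_eq_neg.mpr h0
    exact (smul_eq_zero.mp h2).resolve_left two_ne_zero
  have hg0 := odd_zero g hgodd
  have hh0 := odd_zero h hhodd
  -- Put `y = 0` and halve the resulting vector `2 (f x - g x)`.
  have h1 : N' (φ (x, 0)) t ≤ N (f x - g x) (t / 2) := by
    have e : f (x + 0) + f (x - 0) - 2 • g x - 2 • h 0 = (2 : ℝ) • (f x - g x) := by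
      rw [add_zero, sub_zero, hh0]
      module
    have := hineq x 0 t
    rwa [e, hN.smul_eq 2 _ t two_ne_zero, abs_two] at this
  -- Put `0` and `x` for `x` and `y`: the two values of `f` cancel by oddness.
  have h2 : N' (φ (0, x)) t ≤ N (-h x) (t / 2) := by
    have e : f (0 + x) + f (0 - x) - 2 • g 0 - 2 • h x = (2 : ℝ) • (-h x) := by
      rw [zero_add, zero_sub, hfodd, hg0]
      module
    have := hineq 0 x t
    rwa [e, hN.smul_eq 2 _ t two_ne_zero, abs_two] at this
  have h3 := hN.min_le_add (f x - g x) (-h x) (t / 2) (t / 2)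
  rw [add_halves, ← sub_eq_add_neg] at h3
  exact (min_le_min h1 h2).trans h3
end

section
/- Let X be a real linear space, (Y, N) a fuzzy normed space, (Z, N′) a fuzzy normed space, and φ : X × X → Z. Suppose f, g, h : X → Y are odd functions such that N (f(x+y) + f(x−y) − 2g(x) − 2h(y)) t ≥ N′ (φ(x, y)) t for all x, y ∈ X and all t ∈ ℝ. Then for all x, y ∈ X and t > 0, N (f(x+y) − f(x) − f(y)) (3t) ≥ min {N′ (φ(x,y)) t, N′ (φ(y,x)) t, N′ (φ(x,0)) t, N′ (φ(0,x)) t, N′ (φ(y,0)) t, N′ (φ(0,y)) t}. -/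
/-!
Write `E a b = f (a + b) + f (a - b) - 2 g a - 2 h b` for the defect of the Pexider equation.
Since `f` is odd and `g 0 = h 0 = 0`,
`2 (f (x + y) - f x - f y) = E x y + E y x - E x 0 - E 0 x - E y 0 - E 0 y`.
Each of the six terms has fuzzy norm at `t` at least the stated minimum, so by the triangle
inequality the sum has at `6 t`, and homogeneity with factor `2` turns `6 t` into `3 t`.
-/

open Filter Finset

/-- Estimate (3.5) in the proof of Proposition 3.1: the odd part is approximately
additive. -/
theorem fuzzy_pexider_odd_almost_additive
    {X Y Z : Type*} [AddCommGroup X] [Module ℝ X]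
    [AddCommGroup Y] [Module ℝ Y] [AddCommGroup Z] [Module ℝ Z]
    (N : Y → ℝ → ℝ) (N' : Z → ℝ → ℝ)
    (hN : IsFuzzyNorm N) (hN' : IsFuzzyNorm N')
    (φ : X × X → Z)
    (f g h : X → Y)
    (hfodd : ∀ x : X, f (-x) = -f x)
    (hgodd : ∀ x : X, g (-x) = -g x)
    (hhodd : ∀ x : X, h (-x) = -h x)
    (hineq : ∀ x y : X, ∀ t : ℝ,
      N' (φ (x, y)) t ≤ N (f (x + y) + f (x - y) - 2 • g x - 2 • h y) t) :
    ∀ x y : X, ∀ t : ℝ, 0 < t →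
      min (min (min (N' (φ (x, y)) t) (N' (φ (y, x)) t))
          (min (N' (φ (x, 0)) t) (N' (φ (0, x)) t)))
        (min (N' (φ (y, 0)) t) (N' (φ (0, y)) t)) ≤
      N (f (x + y) - f x - f y) (3 * t) := by
  intro x y t _
  have zero_of_odd : ∀ k : X → Y, (∀ x, k (-x) = -k x) → k 0 = 0 := by
    intro k hk
    have hk0 : k 0 = -k 0 := by simpa using hk 0
    have h2 : (2 : ℝ) • k 0 = 0 := by rw [two_smul, ← eq_neg_iff_add_eq_zero]; exact hk0
    exact (smul_eq_zero_iff_right two_ne_zero).mp h2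
  have hg0 := zero_of_odd g hgodd
  have hh0 := zero_of_odd h hhodd
  have neg_eq : ∀ v : Y, N (-v) t = N v t := fun v => by
    simpa using hN.smul_eq (-1) v t (by norm_num)
  have add_le : ∀ {a : ℝ} {u v : Y} {r s : ℝ}, a ≤ N u r → a ≤ N v s → a ≤ N (u + v) (r + s) :=
    fun hu hv => (le_min hu hv).trans (hN.min_le_add _ _ _ _)
  set m := min (min (min (N' (φ (x, y)) t) (N' (φ (y, x)) t))
          (min (N' (φ (x, 0)) t) (N' (φ (0, x)) t)))
        (min (N' (φ (y, 0)) t) (N' (φ (0, y)) t)) with hm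
  set E : X → X → Y := fun a b => f (a + b) + f (a - b) - 2 • g a - 2 • h b with hE
  have bound : ∀ a b : X, m ≤ N' (φ (a, b)) t → m ≤ N (E a b) t :=
    fun a b hab => hab.trans (hineq a b t)
  have hxy := bound x y (by simp [hm])
  have hyx := bound y x (by simp [hm])
  have hx0 := bound x 0 (by simp [hm])
  have h0x := bound 0 x (by simp [hm])
  have hy0 := bound y 0 (by simp [hm])
  have h0y := bound 0 y (by simp [hm])
  rw [← neg_eq] at hx0 h0x hy0 h0y
  have total := add_le (add_le (add_le (add_le (add_le hxy hyx) hx0) h0x) hy0) h0y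
  have key : E x y + E y x + -E x 0 + -E 0 x + -E y 0 + -E 0 y
      = (2 : ℝ) • (f (x + y) - f x - f y) := by
    have hswap : f (y - x) = -f (x - y) := by rw [← hfodd, neg_sub]
    simp only [hE, hswap, add_comm y x, add_zero, zero_add, sub_zero, zero_sub, hfodd, hg0, hh0,
      smul_zero]
    module
  rw [key, hN.smul_eq 2 _ _ two_ne_zero] at total
  convert total using 2
  rw [abs_of_pos two_pos]
  ring
end
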